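/- Let x_1,…,x_N ∈ ℝ^m be partitioned into k clusters of sizes n_1,…,n_k and set X := Σ_{a=1}^k (1/n_a)·1_a 1_aᵀ. Define M, z, u, ρ, B as in the context and assume ρ_{(a,b)} > 0 for all a ≠ b. If P_{Λ⊥}(B − M)P_{Λ⊥} ⪯ z·P_{Λ⊥} (as quadratic forms), then X solves the k-means SDP. -/

import Mathlib

open scoped BigOperators
open Matrix

namespace Stmt2

/-- Index type for `N` points partitioned into `k` clusters of sizes `n 0, …, n (k−1)`. -/
abbrev Idx (k : ℕ) (n : Fin k → ℕ) := (a : Fin k) × Fin (n a)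

variable {m k : ℕ} {n : Fin k → ℕ}

/-- The matrix of squared pairwise distances `D_{pq} = ‖x_p − x_q‖₂²`. -/
noncomputable def sqDist (x : Idx k n → EuclideanSpace ℝ (Fin m)) :
    Matrix (Idx k n) (Idx k n) ℝ :=
  fun p q => ‖x p - x q‖ ^ 2

/-- Feasibility for the k-means SDP. -/
def SDPFeasible (X : Matrix (Idx k n) (Idx k n) ℝ) : Prop :=
  X.trace = (k : ℝ) ∧ X *ᵥ (fun _ => (1 : ℝ)) = (fun _ => (1 : ℝ)) ∧
    (∀ p q, 0 ≤ X p q) ∧ X.PosSemidef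

/-- `X` solves the k-means SDP for the points `x`. -/
noncomputable def SolvesSDP (x : Idx k n → EuclideanSpace ℝ (Fin m))
    (X : Matrix (Idx k n) (Idx k n) ℝ) : Prop :=
  SDPFeasible X ∧ ∀ Y : Matrix (Idx k n) (Idx k n) ℝ, SDPFeasible Y →
    (sqDist x * X).trace ≤ (sqDist x * Y).trace

/-- The correction term `φ(p) = (1/n_a²)·1ᵀD^{(a,a)}1 − (2/n_a)·e_pᵀD^{(a,a)}1`
for `p` in cluster `a`, so that `M = D + (1/2)(φ1ᵀ + 1φᵀ)`. -/
noncomputable def phi (x : Idx k n → EuclideanSpace ℝ (Fin m)) (p : Idx k n) : ℝ :=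
  ((n p.1 : ℝ) ^ 2)⁻¹ * (∑ i : Fin (n p.1), ∑ j : Fin (n p.1), sqDist x ⟨p.1, i⟩ ⟨p.1, j⟩)
    - (2 / (n p.1 : ℝ)) * ∑ j : Fin (n p.1), sqDist x p ⟨p.1, j⟩

/-- The matrix `M` of equation (7) in the paper. -/
noncomputable def Mmat (x : Idx k n → EuclideanSpace ℝ (Fin m)) :
    Matrix (Idx k n) (Idx k n) ℝ :=
  fun p q => sqDist x p q + phi x p / 2 + phi x q / 2

/-- The row sums of the block `M^{(a,b)}`, i.e. the vector `M^{(a,b)}1 ∈ ℝ^{n_a}`. -/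
noncomputable def Mrow (x : Idx k n → EuclideanSpace ℝ (Fin m)) (a b : Fin k)
    (i : Fin (n a)) : ℝ :=
  ∑ j : Fin (n b), Mmat x ⟨a, i⟩ ⟨b, j⟩

/-- The vector `u_{(a,b)} = M^{(a,b)}1 − z·((n_a + n_b)/(2n_a))·1`. -/
noncomputable def uvec (x : Idx k n → EuclideanSpace ℝ (Fin m)) (z : ℝ) (a b : Fin k)
    (i : Fin (n a)) : ℝ :=
  Mrow x a b i - z * (((n a : ℝ) + (n b : ℝ)) / (2 * (n a : ℝ)))

/-- The scalar `ρ_{(a,b)} = u_{(a,b)}ᵀ1`. -/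
noncomputable def rho (x : Idx k n → EuclideanSpace ℝ (Fin m)) (z : ℝ) (a b : Fin k) : ℝ :=
  ∑ i : Fin (n a), uvec x z a b i

/-- The dual-certificate matrix `B`, with blocks
`B^{(a,b)} = (1/ρ_{(b,a)})·u_{(a,b)}u_{(b,a)}ᵀ` for `a ≠ b` and `B^{(a,a)} = 0`. -/
noncomputable def Bmat (x : Idx k n → EuclideanSpace ℝ (Fin m)) (z : ℝ) :
    Matrix (Idx k n) (Idx k n) ℝ :=
  fun p q => if p.1 = q.1 then 0
    else (rho x z q.1 p.1)⁻¹ * uvec x z p.1 q.1 p.2 * uvec x z q.1 p.1 q.2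

/-- The orthogonal projection `P_{Λ⊥} = I − Σ_a (1/n_a)·1_a1_aᵀ` onto the orthogonal
complement of the span of the cluster indicators. -/
noncomputable def Pperp (k : ℕ) (n : Fin k → ℕ) : Matrix (Idx k n) (Idx k n) ℝ :=
  fun p q => (if p = q then 1 else 0) - (if p.1 = q.1 then ((n p.1 : ℝ))⁻¹ else 0)

end Stmt2

open Stmt2

/-!
The argument is weak duality with complementary slackness. Put `A = ∑ₐ (1/nₐ) 1ₐ1ₐᵀ` and
`E p q = (z/2) (1/n_p + 1/n_q)`, where `n_p` is the size of the cluster of `p`. The slack matrix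
`S = z • 1 - (B - M) - E` satisfies `S * A = 0`: this is what the prescribed block row sums of `B`
and `M` amount to. Since `E` is constant on blocks, it is killed by `P = 1 - A`, so that
`S = P * S * P = z • P - P * (B - M) * P`, which is positive semidefinite by assumption. Finally `D`
differs from `S + B` only by a multiple of the identity and a matrix `f 1ᵀ + 1 fᵀ`, whose traces
against a feasible `Y` do not depend on `Y`; and `tr (S Y) + tr (B Y)` is nonnegative for every
feasible `Y` and vanishes for `Y = A`.
-/

namespace Stmt2

open scoped ComplexOrder MatrixOrder

section TraceDuality

variable {ι : Type*}

/-- The matrix `f 1ᵀ + 1 fᵀ`, whose trace against a symmetric matrix with unit row sums is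
determined by `f` alone. -/
def pairSum {R : Type*} [Add R] (f : ι → R) : Matrix ι ι R :=
  Matrix.of fun p q => f p + f q

lemma pairSum_eq_vecMulVec {R : Type*} [NonAssocSemiring R] (f : ι → R) :
    pairSum f = vecMulVec f 1 + vecMulVec 1 f := by
  ext p q
  simp [pairSum]

lemma pairSum_apply {R : Type*} [Add R] (f : ι → R) (p q : ι) : pairSum f p q = f p + f q :=
  rfl

lemma isHermitian_pairSum (f : ι → ℝ) : (pairSum f).IsHermitian :=
  IsHermitian.ext fun p q => add_comm (f q) (f p)

variable [Fintype ι]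

lemma trace_pairSum_mul {R : Type*} [CommSemiring R] (f : ι → R) {Y : Matrix ι ι R}
    (hrow : Y *ᵥ 1 = 1) (hcol : 1 ᵥ* Y = 1) : (pairSum f * Y).trace = 2 * ∑ p, f p := by
  rw [pairSum_eq_vecMulVec, Matrix.add_mul, vecMulVec_mul, vecMulVec_mul, trace_add,
    trace_vecMulVec, trace_vecMulVec, hcol, dotProduct_comm 1, ← dotProduct_mulVec, hrow,
    dotProduct_one, two_mul]

lemma trace_mul_nonneg_of_posSemidef {𝕜 : Type*} [RCLike 𝕜] {A B : Matrix ι ι 𝕜}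
    (hA : A.PosSemidef) (hB : B.PosSemidef) : 0 ≤ (A * B).trace := by
  classical
  obtain ⟨C, rfl⟩ := CStarAlgebra.nonneg_iff_eq_star_mul_self.mp hA.nonneg
  rw [← trace_mul_cycle]
  exact (hB.mul_mul_conjTranspose_same C).trace_nonneg

lemma trace_mul_nonneg_of_entrywise_nonneg {R : Type*} [Semiring R] [PartialOrder R]
    [IsOrderedRing R] {A B : Matrix ι ι R} (hA : ∀ p q, 0 ≤ A p q) (hB : ∀ p q, 0 ≤ B p q) :
    0 ≤ (A * B).trace :=
  Finset.sum_nonneg fun p _ => Finset.sum_nonneg fun q _ => mul_nonneg (hA p q) (hB q p)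

/-- The feasible set of the k-means semidefinite program on an arbitrary finite index type, with a
real number `c` in place of the number of clusters. -/
def kMeansFeasible (ι : Type*) [Fintype ι] (c : ℝ) : Set (Matrix ι ι ℝ) :=
  {Y | Y.trace = c ∧ (Y *ᵥ fun _ => 1) = (fun _ => 1) ∧ (∀ p q, 0 ≤ Y p q) ∧ Y.PosSemidef}

variable [DecidableEq ι] {D S B X Y : Matrix ι ι ℝ} {f : ι → ℝ} {c z : ℝ}

lemma trace_mul_of_mem_kMeansFeasible (hD : D = S + B + pairSum f - z • 1)
    (hY : Y ∈ kMeansFeasible ι c) :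
    (D * Y).trace = (S * Y).trace + (B * Y).trace + 2 * ∑ p, f p - z * c := by
  obtain ⟨htrace, hrow, -, hpsd⟩ := hY
  have hcol : 1 ᵥ* Y = 1 := by
    rw [← mulVec_transpose, ← conjTranspose_eq_transpose_of_trivial, hpsd.isHermitian]
    exact hrow
  rw [hD, Matrix.sub_mul, Matrix.add_mul, Matrix.add_mul, trace_sub, trace_add, trace_add,
    trace_pairSum_mul f hrow hcol, smul_mul, Matrix.one_mul, trace_smul, htrace, smul_eq_mul]

lemma isMinOn_trace_of_complementary_slackness (hD : D = S + B + pairSum f - z • 1)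
    (hS : S.PosSemidef) (hB : ∀ p q, 0 ≤ B p q) (hX : X ∈ kMeansFeasible ι c)
    (hSX : (S * X).trace = 0) (hBX : (B * X).trace = 0) :
    IsMinOn (fun Y => (D * Y).trace) (kMeansFeasible ι c) X := by
  refine isMinOn_iff.mpr fun Y hY => ?_
  have hSY : 0 ≤ (S * Y).trace := trace_mul_nonneg_of_posSemidef hS hY.2.2.2
  have hBY : 0 ≤ (B * Y).trace := trace_mul_nonneg_of_entrywise_nonneg hB hY.2.2.1
  rw [trace_mul_of_mem_kMeansFeasible hD hX, trace_mul_of_mem_kMeansFeasible hD hY]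
  linarith

end TraceDuality

section ClusterAverage

variable {κ : Type*} [DecidableEq κ] {ι : κ → Type*} [∀ a, Fintype (ι a)]

/-- The matrix `∑ₐ (1/nₐ) 1ₐ1ₐᵀ` of averaging over clusters. A partition of the index set is encoded
by taking the index type to be the disjoint union of the clusters `ι a`. -/
noncomputable def clusterAverage (ι : κ → Type*) [∀ a, Fintype (ι a)] :
    Matrix (Σ a, ι a) (Σ a, ι a) ℝ :=
  Matrix.of fun p q => if p.1 = q.1 then (Fintype.card (ι p.1) : ℝ)⁻¹ else 0

lemma clusterAverage_apply (a b : κ) (i : ι a) (j : ι b) :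
    clusterAverage ι ⟨a, i⟩ ⟨b, j⟩ = if a = b then (Fintype.card (ι a) : ℝ)⁻¹ else 0 :=
  rfl

lemma isHermitian_clusterAverage : (clusterAverage ι).IsHermitian := by
  refine IsHermitian.ext fun p q => ?_
  by_cases h : p.1 = q.1
  · simp [clusterAverage, h]
  · simp [clusterAverage, h, Ne.symm h]

variable [Fintype κ]

lemma mul_clusterAverage_apply (C : Matrix (Σ a, ι a) (Σ a, ι a) ℝ) (p q : Σ a, ι a) :
    (C * clusterAverage ι) p q = (Fintype.card (ι q.1) : ℝ)⁻¹ * ∑ j, C p ⟨q.1, j⟩ := by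
  rw [mul_apply, Fintype.sum_sigma, Finset.sum_eq_single q.1]
  · simp [clusterAverage, Finset.mul_sum, mul_comm]
  · intro b _ hb
    simp [clusterAverage, hb]
  · simp

lemma mul_clusterAverage_of_block_const {C : Matrix (Σ a, ι a) (Σ a, ι a) ℝ}
    {g : (Σ a, ι a) → κ → ℝ} (hC : ∀ p q, C p q = g p q.1) : C * clusterAverage ι = C := by
  ext p q
  have : Nonempty (ι q.1) := ⟨q.2⟩
  simp [mul_clusterAverage_apply, hC]

lemma isStarProjection_clusterAverage : IsStarProjection (clusterAverage ι) where
  isIdempotentElem := mul_clusterAverage_of_block_const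
    (g := fun p b => if p.1 = b then (Fintype.card (ι p.1) : ℝ)⁻¹ else 0) fun _ _ => rfl
  isSelfAdjoint := isHermitian_clusterAverage

lemma trace_clusterAverage [∀ a, Nonempty (ι a)] :
    (clusterAverage ι).trace = Fintype.card κ := by
  simp [trace, Fintype.sum_sigma, clusterAverage_apply]

lemma clusterAverage_mulVec_one : (clusterAverage ι *ᵥ fun _ => 1) = fun _ => 1 := by
  ext ⟨a, i⟩
  have : Nonempty (ι a) := ⟨i⟩
  simp [mulVec, dotProduct, Fintype.sum_sigma, clusterAverage_apply, Finset.sum_ite_irrel]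

lemma clusterAverage_mem_kMeansFeasible [∀ a, Nonempty (ι a)] :
    clusterAverage ι ∈ kMeansFeasible (Σ a, ι a) (Fintype.card κ) := by
  classical
  refine ⟨trace_clusterAverage, clusterAverage_mulVec_one, fun p q => ?_,
    isStarProjection_clusterAverage.nonneg.posSemidef⟩
  rw [clusterAverage, of_apply]
  split_ifs <;> positivity

lemma trace_mul_clusterAverage_eq_zero {B : Matrix (Σ a, ι a) (Σ a, ι a) ℝ}
    (hB : ∀ p q, p.1 = q.1 → B p q = 0) : (B * clusterAverage ι).trace = 0 :=
  Finset.sum_eq_zero fun p _ => by simp [mul_clusterAverage_apply, hB]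

end ClusterAverage

lemma one_sub_mul_mul_one_sub_eq_self {R : Type*} [Ring R] [StarRing R] {p s : R}
    (hp : IsSelfAdjoint p) (hs : IsSelfAdjoint s) (h : s * p = 0) :
    (1 - p) * s * (1 - p) = s := by
  have h' : p * s = 0 := by simpa [hp.star_eq, hs.star_eq] using congrArg star h
  simp [sub_mul, mul_sub, h, h']

section DualCertificate

variable {κ : Type*} {ι : κ → Type*} [∀ a, Fintype (ι a)]
  {D M B : Matrix (Σ a, ι a) (Σ a, ι a) ℝ} {z : ℝ}

/-- The multiplier `z / (2 n_p)` of the row-sum constraint at `p`, with `n_p` the size of the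
cluster of `p`. -/
noncomputable def sizeMultiplier (z : ℝ) (p : Σ a, ι a) : ℝ :=
  z / (2 * Fintype.card (ι p.1))

lemma pairSum_sizeMultiplier_mul_clusterAverage [DecidableEq κ] [Fintype κ] :
    pairSum (sizeMultiplier z) * clusterAverage ι = pairSum (sizeMultiplier z) :=
  mul_clusterAverage_of_block_const
    (g := fun p b => sizeMultiplier z p + z / (2 * Fintype.card (ι b))) fun _ _ => rfl

variable [DecidableEq κ] [∀ a, DecidableEq (ι a)]

/-- The dual slack matrix `S` of a certificate, which pairs with the constraint that the primal
variable is positive semidefinite. -/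
noncomputable def slack (M B : Matrix (Σ a, ι a) (Σ a, ι a) ℝ) (z : ℝ) :
    Matrix (Σ a, ι a) (Σ a, ι a) ℝ :=
  z • 1 - (B - M) - pairSum (sizeMultiplier z)

lemma isHermitian_slack (hM : M.IsHermitian) (hB : B.IsHermitian) :
    (slack M B z).IsHermitian :=
  ((isHermitian_one.smul (IsSelfAdjoint.all z)).sub (hB.sub hM)).sub (isHermitian_pairSum _)

variable [Fintype κ]

/-- `B` and `z` certify that averaging over the clusters `ι a` minimizes `tr (D X)`. Here `M` is the
translate of `D` by a matrix `f 1ᵀ + 1 fᵀ` whose diagonal blocks have zero row sums, and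
`1 - clusterAverage ι` is the orthogonal projection `P_{Λ⊥}`. The prescribed row sums of the blocks
of `B` are those of the vectors `u_{(a,b)}`; `B` itself need not have rank-one blocks. -/
structure IsDualCertificate (D M B : Matrix (Σ a, ι a) (Σ a, ι a) ℝ) (z : ℝ) : Prop where
  exists_eq_add_pairSum : ∃ f, M = D + pairSum f
  isHermitian_M : M.IsHermitian
  isHermitian_B : B.IsHermitian
  sum_M_self : ∀ p, ∑ j, M p ⟨p.1, j⟩ = 0
  B_eq_zero : ∀ p q, p.1 = q.1 → B p q = 0
  B_nonneg : ∀ p q, 0 ≤ B p q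
  sum_B : ∀ p b, p.1 ≠ b → ∑ j, B p ⟨b, j⟩ = ∑ j, M p ⟨b, j⟩ -
    z * ((Fintype.card (ι p.1) + Fintype.card (ι b)) / (2 * Fintype.card (ι p.1)))
  posSemidef : (z • (1 - clusterAverage ι) -
    (1 - clusterAverage ι) * (B - M) * (1 - clusterAverage ι)).PosSemidef

namespace IsDualCertificate

lemma slack_mul_clusterAverage (h : IsDualCertificate D M B z) :
    slack M B z * clusterAverage ι = 0 := by
  rw [slack, Matrix.sub_mul, pairSum_sizeMultiplier_mul_clusterAverage, Matrix.sub_mul,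
    Matrix.sub_mul, smul_mul, Matrix.one_mul]
  ext ⟨a, i⟩ ⟨b, j⟩
  have : Nonempty (ι a) := ⟨i⟩
  have : Nonempty (ι b) := ⟨j⟩
  have ha : (Fintype.card (ι a) : ℝ) ≠ 0 := by simp
  have hb : (Fintype.card (ι b) : ℝ) ≠ 0 := by simp
  simp only [Matrix.sub_apply, Matrix.smul_apply, smul_eq_mul, Matrix.zero_apply,
    mul_clusterAverage_apply, pairSum_apply, sizeMultiplier, clusterAverage_apply]
  obtain rfl | hab := eq_or_ne a b
  · have hM : ∑ j, M ⟨a, i⟩ ⟨a, j⟩ = 0 := h.sum_M_self ⟨a, i⟩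
    have hB : ∑ j, B ⟨a, i⟩ ⟨a, j⟩ = 0 :=
      Finset.sum_eq_zero fun j _ => h.B_eq_zero ⟨a, i⟩ ⟨a, j⟩ rfl
    rw [hM, hB, if_pos rfl]
    field_simp
    ring
  · rw [h.sum_B ⟨a, i⟩ b hab, if_neg hab]
    field_simp
    ring

lemma posSemidef_slack (h : IsDualCertificate D M B z) : (slack M B z).PosSemidef := by
  set P := 1 - clusterAverage ι with hP
  have hPP : P * P = P := isStarProjection_clusterAverage.one_sub.isIdempotentElem
  have hEP : pairSum (sizeMultiplier z) * P = 0 := by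
    rw [hP, Matrix.mul_sub, Matrix.mul_one, pairSum_sizeMultiplier_mul_clusterAverage, sub_self]
  have hslack : slack M B z = z • P - P * (B - M) * P := calc
    slack M B z = P * slack M B z * P :=
      (one_sub_mul_mul_one_sub_eq_self isStarProjection_clusterAverage.isSelfAdjoint
        (isHermitian_slack h.isHermitian_M h.isHermitian_B).isSelfAdjoint
        h.slack_mul_clusterAverage).symm
    _ = P * (z • 1) * P - P * (B - M) * P - P * (pairSum (sizeMultiplier z) * P) := by
      simp only [slack, Matrix.mul_sub P, Matrix.sub_mul _ _ P, Matrix.mul_assoc]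
    _ = z • P - P * (B - M) * P := by
      rw [hEP, Matrix.mul_zero, sub_zero, Matrix.mul_smul, Matrix.mul_one, smul_mul, hPP]
  exact hslack ▸ h.posSemidef

lemma exists_eq_slack_add (h : IsDualCertificate D M B z) :
    ∃ f, D = slack M B z + B + pairSum f - z • 1 := by
  obtain ⟨f, hM⟩ := h.exists_eq_add_pairSum
  refine ⟨sizeMultiplier z - f, ?_⟩
  ext p q
  simp only [slack, hM, pairSum_apply, Matrix.add_apply, Matrix.sub_apply, Pi.sub_apply]
  ring

end IsDualCertificate

end DualCertificate

section KMeans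

variable {m k : ℕ} {n : Fin k → ℕ} {x : Idx k n → EuclideanSpace ℝ (Fin m)} {z : ℝ}

lemma clusterAverage_fin : clusterAverage (fun a => Fin (n a)) =
    fun p q => if p.1 = q.1 then (n p.1 : ℝ)⁻¹ else 0 := by
  ext p q
  simp [clusterAverage]

lemma Pperp_eq_one_sub_clusterAverage :
    Pperp k n = 1 - clusterAverage fun a => Fin (n a) := by
  ext p q
  simp [Pperp, clusterAverage, one_apply]

lemma solvesSDP_iff_mem_and_isMinOn {X : Matrix (Idx k n) (Idx k n) ℝ} :
    SolvesSDP x X ↔ X ∈ kMeansFeasible (Idx k n) (Fintype.card (Fin k)) ∧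
      IsMinOn (fun Y => (sqDist x * Y).trace)
        (kMeansFeasible (Idx k n) (Fintype.card (Fin k))) X := by
  rw [Fintype.card_fin]
  rfl

lemma Mmat_eq_sqDist_add_pairSum (x : Idx k n → EuclideanSpace ℝ (Fin m)) :
    Mmat x = sqDist x + pairSum fun p => phi x p / 2 := by
  ext p q
  simp [Mmat, pairSum, add_assoc]

lemma isHermitian_sqDist (x : Idx k n → EuclideanSpace ℝ (Fin m)) : (sqDist x).IsHermitian :=
  IsHermitian.ext fun p q => by simp [sqDist, norm_sub_rev]

lemma isHermitian_Mmat (x : Idx k n → EuclideanSpace ℝ (Fin m)) : (Mmat x).IsHermitian := by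
  rw [Mmat_eq_sqDist_add_pairSum]
  exact (isHermitian_sqDist x).add (isHermitian_pairSum _)

lemma sum_phi (x : Idx k n → EuclideanSpace ℝ (Fin m)) (a : Fin k) :
    ∑ i, phi x ⟨a, i⟩ = -(n a : ℝ)⁻¹ * ∑ i, ∑ j, sqDist x ⟨a, i⟩ ⟨a, j⟩ := by
  have hphi (i : Fin (n a)) : phi x ⟨a, i⟩ =
      ((n a : ℝ) ^ 2)⁻¹ * ∑ i, ∑ j, sqDist x ⟨a, i⟩ ⟨a, j⟩ -
        2 / (n a : ℝ) * ∑ j, sqDist x ⟨a, i⟩ ⟨a, j⟩ := rfl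
  simp only [hphi, Finset.sum_sub_distrib, Finset.sum_const, Finset.card_univ, Fintype.card_fin,
    nsmul_eq_mul, ← Finset.mul_sum]
  field_simp
  ring

lemma Mrow_self (x : Idx k n → EuclideanSpace ℝ (Fin m)) (a : Fin k) (i : Fin (n a)) :
    Mrow x a a i = 0 := by
  have ha : (n a : ℝ) ≠ 0 := mod_cast i.pos.ne'
  have hsum : Mrow x a a i = ∑ j, sqDist x ⟨a, i⟩ ⟨a, j⟩ + n a * (phi x ⟨a, i⟩ / 2)
      + (∑ j, phi x ⟨a, j⟩) / 2 := by
    simp [Mrow, Mmat, Finset.sum_add_distrib, Finset.sum_div]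
  rw [hsum, sum_phi, phi]
  field_simp
  ring

lemma sum_Mrow_comm (x : Idx k n → EuclideanSpace ℝ (Fin m)) (a b : Fin k) :
    ∑ i, Mrow x a b i = ∑ j, Mrow x b a j := by
  simp only [Mrow]
  rw [Finset.sum_comm]
  exact Fintype.sum_congr _ _ fun j => Fintype.sum_congr _ _ fun i =>
    ((isHermitian_Mmat x).apply ⟨a, i⟩ ⟨b, j⟩).symm

lemma rho_comm (x : Idx k n → EuclideanSpace ℝ (Fin m)) (z : ℝ) {a b : Fin k}
    (ha : 0 < n a) (hb : 0 < n b) : rho x z a b = rho x z b a := by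
  have hrho {a : Fin k} (b : Fin k) (ha : 0 < n a) :
      rho x z a b = ∑ i, Mrow x a b i - z * ((n a + n b) / 2) := by
    have ha' : (n a : ℝ) ≠ 0 := mod_cast ha.ne'
    simp only [rho, uvec, Finset.sum_sub_distrib, Finset.sum_const, Finset.card_univ,
      Fintype.card_fin, nsmul_eq_mul]
    field_simp
  rw [hrho b ha, hrho a hb, sum_Mrow_comm, add_comm (n a : ℝ)]

lemma isHermitian_Bmat (x : Idx k n → EuclideanSpace ℝ (Fin m)) (z : ℝ) :
    (Bmat x z).IsHermitian := by
  refine IsHermitian.ext fun p q => ?_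
  obtain h | h := eq_or_ne p.1 q.1
  · simp [Bmat, h]
  · simp only [Bmat, if_neg h, if_neg h.symm, star_trivial]
    rw [rho_comm x z p.2.pos q.2.pos]
    ring

lemma sum_Bmat {a b : Fin k} (hab : a ≠ b) (hρ : rho x z b a ≠ 0) (i : Fin (n a)) :
    ∑ j, Bmat x z ⟨a, i⟩ ⟨b, j⟩ = uvec x z a b i := by
  simp only [Bmat, if_neg hab, ← Finset.mul_sum]
  rw [← rho]
  field_simp

lemma uvec_nonneg {a b : Fin k} {i : Fin (n a)}
    (h : z ≤ 2 * (n a : ℝ) / ((n a : ℝ) + (n b : ℝ)) * Mrow x a b i) : 0 ≤ uvec x z a b i := by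
  have ha : (0 : ℝ) < n a := mod_cast i.pos
  rw [uvec, sub_nonneg, ← le_div_iff₀ (by positivity)]
  refine h.trans_eq ?_
  field_simp

lemma Bmat_nonneg (hu : ∀ a b, a ≠ b → ∀ i, 0 ≤ uvec x z a b i) (p q : Idx k n) :
    0 ≤ Bmat x z p q := by
  rw [Bmat]
  split_ifs with h
  · exact le_rfl
  · have hρ : 0 ≤ rho x z q.1 p.1 := Finset.sum_nonneg fun i _ => hu _ _ (Ne.symm h) i
    exact mul_nonneg (mul_nonneg (inv_nonneg.mpr hρ) (hu _ _ h _)) (hu _ _ (Ne.symm h) _)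

lemma isDualCertificate_Bmat
    (hu : ∀ a b, a ≠ b → ∀ i, 0 ≤ uvec x z a b i) (hρ : ∀ a b, a ≠ b → rho x z a b ≠ 0)
    (hcert : (z • Pperp k n - Pperp k n * (Bmat x z - Mmat x) * Pperp k n).PosSemidef) :
    IsDualCertificate (sqDist x) (Mmat x) (Bmat x z) z where
  exists_eq_add_pairSum := ⟨_, Mmat_eq_sqDist_add_pairSum x⟩
  isHermitian_M := isHermitian_Mmat x
  isHermitian_B := isHermitian_Bmat x z
  sum_M_self p := Mrow_self x p.1 p.2
  B_eq_zero _ _ h := if_pos h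
  B_nonneg := Bmat_nonneg hu
  sum_B p b hpb := by
    rw [sum_Bmat hpb (hρ b p.1 hpb.symm), Fintype.card_fin, Fintype.card_fin]
    rfl
  posSemidef := Pperp_eq_one_sub_clusterAverage (n := n) ▸ hcert

end KMeans

end Stmt2

theorem dual_certificate_implies_SDP_optimal_general
    {κ : Type*} [Fintype κ] [DecidableEq κ] {ι : κ → Type*} [∀ a, Fintype (ι a)]
    [∀ a, DecidableEq (ι a)] [∀ a, Nonempty (ι a)]
    {D M B : Matrix (Σ a, ι a) (Σ a, ι a) ℝ} {z : ℝ} (h : IsDualCertificate D M B z) :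
    clusterAverage ι ∈ kMeansFeasible (Σ a, ι a) (Fintype.card κ) ∧
      IsMinOn (fun Y => (D * Y).trace) (kMeansFeasible (Σ a, ι a) (Fintype.card κ))
        (clusterAverage ι) := by
  obtain ⟨f, hD⟩ := h.exists_eq_slack_add
  refine ⟨clusterAverage_mem_kMeansFeasible, ?_⟩
  refine isMinOn_trace_of_complementary_slackness hD h.posSemidef_slack h.B_nonneg
    clusterAverage_mem_kMeansFeasible ?_ (trace_mul_clusterAverage_eq_zero h.B_eq_zero)
  rw [h.slack_mul_clusterAverage, trace_zero]

/-- (Theorem 2.4 of the paper.) With `M`, `z`, `u`, `ρ`, `B` as above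
and `ρ_{(a,b)} > 0` for all `a ≠ b`, if `P_{Λ⊥}(B − M)P_{Λ⊥} ⪯ z·P_{Λ⊥}`, then
`X = Σ_a (1/n_a)·1_a1_aᵀ` solves the k-means SDP. -/
theorem dual_certificate_implies_SDP_optimal
    (m k : ℕ) (hk : 1 < k) (n : Fin k → ℕ) (hn : ∀ a, 0 < n a)
    (x : Idx k n → EuclideanSpace ℝ (Fin m))
    (X : Matrix (Idx k n) (Idx k n) ℝ)
    (hX : X = fun p q => if p.1 = q.1 then ((n p.1 : ℝ))⁻¹ else 0)
    (z : ℝ)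
    (hz : IsLeast {t : ℝ | ∃ (a b : Fin k) (i : Fin (n a)), a ≠ b ∧
      t = (2 * (n a : ℝ) / ((n a : ℝ) + (n b : ℝ))) * Mrow x a b i} z)
    (hρ : ∀ a b : Fin k, a ≠ b → 0 < rho x z a b)
    (hcert : (z • Pperp k n - Pperp k n * (Bmat x z - Mmat x) * Pperp k n).PosSemidef) :
    SolvesSDP x X := by
  have hne (a : Fin k) : Nonempty (Fin (n a)) := Fin.pos_iff_nonempty.mp (hn a)
  rw [hX, ← clusterAverage_fin, solvesSDP_iff_mem_and_isMinOn]
  exact dual_certificate_implies_SDP_optimal_general <| isDualCertificate_Bmat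
    (fun a b hab i => uvec_nonneg (hz.2 ⟨a, b, i, hab, rfl⟩))
    (fun a b hab => (hρ a b hab).ne') hcert
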